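/- Let α ∈ S_n be a maximal quasi-diagram. Then for every i ∈ {1,…,n+1}, the i-expansion ι_i(α) ∈ S_{n+1} is a maximal quasi-diagram, i.e. ζ_{n+1}·ι_i(α) has exactly one orbit on {1,…,n+1}. -/

import Mathlib

/-- The cycle `ϑ_{i,n+1} = (i, i+1, …, n+1)` of `S_{n+1}`; 0-indexed on `Fin (n+1)` it is the
cycle `(a, a+1, …, Fin.last n)` where `a` corresponds to `i`. -/
def vartheta {n : ℕ} (a : Fin (n + 1)) : Equiv.Perm (Fin (n + 1)) :=
  Fin.revPerm * (Fin.cycleRange a.rev)⁻¹ * Fin.revPerm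

/-- A permutation of `Fin n` regarded as a permutation of `Fin (n+1)` fixing the last point. -/
def castPerm {n : ℕ} (α : Equiv.Perm (Fin n)) : Equiv.Perm (Fin (n + 1)) :=
  α.viaFintypeEmbedding Fin.castSuccEmb

/-- The `i`-expansion `ι_i(α) = ϑ_{i,n+1} α ϑ_{i,n+1}⁻¹` of a quasi-diagram `α ∈ S_n`. -/
def expand {n : ℕ} (a : Fin (n + 1)) (α : Equiv.Perm (Fin n)) : Equiv.Perm (Fin (n + 1)) :=
  vartheta a * castPerm α * (vartheta a)⁻¹

theorem vartheta_last' {n : ℕ} (a : Fin (n + 1)) : vartheta a (Fin.last n) = a := by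
  simp [vartheta, Equiv.Perm.inv_def]

theorem vartheta_castSucc' {n : ℕ} (a : Fin (n + 1)) (x : Fin n) :
    vartheta a x.castSucc = a.succAbove x := by
  simp [vartheta, Equiv.Perm.inv_def, Fin.rev_castSucc, Fin.rev_succAbove]

theorem expand_self' {n : ℕ} (a : Fin (n + 1)) (α : Equiv.Perm (Fin n)) :
    expand a α a = a := by
  have h : (vartheta a)⁻¹ a = Fin.last n := by
    rw [Equiv.Perm.inv_eq_iff_eq, vartheta_last']
  have h2 : castPerm α (Fin.last n) = Fin.last n := by
    unfold castPerm
    apply Equiv.Perm.viaFintypeEmbedding_apply_notMem_range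
    simp
  simp only [expand, Equiv.Perm.mul_apply, h, h2, vartheta_last']

theorem expand_succAbove' {n : ℕ} (a : Fin (n + 1)) (α : Equiv.Perm (Fin n)) (x : Fin n) :
    expand a α (a.succAbove x) = a.succAbove (α x) := by
  have h : (vartheta a)⁻¹ (a.succAbove x) = x.castSucc := by
    rw [Equiv.Perm.inv_eq_iff_eq, vartheta_castSucc']
  have h2 : castPerm α x.castSucc = (α x).castSucc := by
    unfold castPerm
    exact Equiv.Perm.viaFintypeEmbedding_apply_image α Fin.castSuccEmb x
  simp only [expand, Equiv.Perm.mul_apply, h, h2, vartheta_castSucc']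

theorem rot_val' (m : ℕ) (i : Fin (m + 1)) :
    (finRotate (m + 1) i).val = if i.val = m then 0 else i.val + 1 := by
  rw [finRotate_apply, Fin.val_add_one]
  simp [Fin.ext_iff]

theorem succAbove_val' {n : ℕ} (a : Fin (n + 1)) (x : Fin n) :
    (a.succAbove x).val = if x.val < a.val then x.val else x.val + 1 := by
  simp only [Fin.succAbove, Fin.lt_def, Fin.val_castSucc]
  split_ifs <;> simp

/-- Let `α ∈ S_n` be a maximal quasi-diagram (an involution of `Fin n` such
that `ζ_n α` has exactly one orbit).  Then for every `i ∈ {1,…,n+1}` (i.e. `a : Fin (n+1)`),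
the `i`-expansion `ι_i(α) ∈ S_{n+1}` is maximal: `ζ_{n+1} ι_i(α)` has exactly one orbit. -/
theorem stmt_11 (n : ℕ) (hn : 0 < n) (α : Equiv.Perm (Fin n))
    (hα : ∀ x, α (α x) = x)
    (hmax : ∀ x y : Fin n, (finRotate n * α).SameCycle x y) :
    ∀ a : Fin (n + 1), ∀ x y : Fin (n + 1),
      (finRotate (n + 1) * expand a α).SameCycle x y := by
  obtain ⟨m, rfl⟩ : ∃ m, n = m + 1 := ⟨n - 1, by omega⟩
  intro a
  set τ := finRotate (m + 1 + 1) * expand a α with hτ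
  have hrot : ∀ y : Fin (m + 1),
      finRotate (m + 1 + 1) (a.succAbove y) = a.succAbove (finRotate (m + 1) y) ∨
      (finRotate (m + 1 + 1) (a.succAbove y) = a ∧
        finRotate (m + 1 + 1) a = a.succAbove (finRotate (m + 1) y)) := by
    intro y
    simp only [Fin.ext_iff, rot_val', succAbove_val']
    have := a.isLt
    have := y.isLt
    split_ifs <;> omega
  have hτa : τ a = finRotate (m + 1 + 1) a := by
    rw [hτ, Equiv.Perm.mul_apply, expand_self']
  have step : ∀ x : Fin (m + 1),
      τ.SameCycle (a.succAbove x) (a.succAbove ((finRotate (m + 1) * α) x)) := by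
    intro x
    have h1 : τ (a.succAbove x) = finRotate (m + 1 + 1) (a.succAbove (α x)) := by
      rw [hτ, Equiv.Perm.mul_apply, expand_succAbove']
    rw [Equiv.Perm.mul_apply]
    rcases hrot (α x) with h | ⟨h, h'⟩
    · rw [← h, ← h1]
      exact Equiv.Perm.sameCycle_apply_right.2 (Equiv.Perm.SameCycle.refl _ _)
    · have h2 : τ (τ (a.succAbove x)) = a.succAbove (finRotate (m + 1) (α x)) := by
        rw [h1, h, hτa, h']
      rw [← h2]
      exact Equiv.Perm.sameCycle_apply_right.2
        (Equiv.Perm.sameCycle_apply_right.2 (Equiv.Perm.SameCycle.refl _ _))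
  have steps : ∀ (k : ℕ) (x : Fin (m + 1)),
      τ.SameCycle (a.succAbove x) (a.succAbove (((finRotate (m + 1) * α) ^ k) x)) := by
    intro k
    induction k with
    | zero => intro x; exact Equiv.Perm.SameCycle.refl τ (a.succAbove x)
    | succ k ih =>
      intro x
      rw [pow_succ', Equiv.Perm.mul_apply]
      exact (ih x).trans (step _)
  have all : ∀ x y : Fin (m + 1), τ.SameCycle (a.succAbove x) (a.succAbove y) := by
    intro x y
    obtain ⟨k, hk⟩ := (hmax x y).exists_nat_pow_eq
    rw [← hk]
    exact steps k x
  have base : ∀ x, τ.SameCycle x (a.succAbove 0) := by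
    intro x
    by_cases hx : x = a
    · have hne : τ a ≠ a := by
        rw [hτa, Ne, Fin.ext_iff, rot_val']
        split_ifs <;> omega
      obtain ⟨z, hz⟩ := Fin.exists_succAbove_eq hne
      rw [hx]
      apply Equiv.Perm.sameCycle_apply_left.1
      rw [← hz]
      exact all _ _
    · obtain ⟨z, hz⟩ := Fin.exists_succAbove_eq hx
      rw [← hz]
      exact all _ _
  intro x y
  exact (base x).trans (base y).symm
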